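/- Let A₁ and A₂ be complex C*-algebras (complete normed complex star-algebras satisfying the C*-identity ‖a*a‖ = ‖a‖²), with A₁ finite-dimensional over ℂ of complex dimension at least 2. If there exists a bijection φ : A₁ → A₂ such that for all u, v ∈ A₁, u ⊥ v if and only if φ(u) ⊥ φ(v) (Birkhoff–James orthogonality with complex scalars on both sides), then there exists a star-algebra isomorphism A₁ ≅ A₂ over ℂ. -/

import Mathlib

/-- Birkhoff–James orthogonality with complex scalars:
`u ⊥ v` iff `‖u + c • v‖ ≥ ‖u‖` for all `c : ℂ`. -/
def BJOrth {E : Type*} [Norm E] [Add E] [SMul ℂ E] (u v : E) : Prop :=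
  ∀ c : ℂ, ‖u‖ ≤ ‖u + c • v‖

namespace BJC
open scoped ComplexOrder

lemma nilp_zero {A : Type*} [CStarAlgebra A] (b : A) (hb : IsSelfAdjoint b) (hn : IsNilpotent b) :
    b = 0 := by
  obtain ⟨n, hn⟩ := hn
  have h1 : b ^ (2 ^ n) = 0 := pow_eq_zero_of_le (Nat.lt_two_pow_self).le hn
  have h2 := hb.nnnorm_pow_two_pow n
  rw [h1, nnnorm_zero] at h2
  have := pow_eq_zero_iff (by positivity) |>.1 h2.symm
  simpa using this

lemma semisimple {A : Type*} [CStarAlgebra A] [FiniteDimensional ℂ A] : IsSemisimpleRing A := by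
  have : IsArtinianRing A := IsArtinianRing.of_finite ℂ A
  rw [IsArtinianRing.isSemisimpleRing_iff_jacobson, eq_bot_iff]
  intro a ha
  obtain ⟨n, hn⟩ := IsSemiprimaryRing.isNilpotent (R := A)
  have h1 : star a * a ∈ Ring.jacobson A := Ideal.mul_mem_left _ _ ha
  have h2 : IsNilpotent (star a * a) := ⟨n, by
    have := Ideal.pow_mem_pow h1 n
    rw [hn] at this; simpa using this⟩
  have := nilp_zero _ (IsSelfAdjoint.star_mul_self a) h2
  simpa using this

variable {A : Type*} [CStarAlgebra A] {n : ℕ}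

lemma root_mem (ρ : A →ₐ[ℂ] Matrix (Fin n) (Fin n) ℂ) (a : A) (z : ℂ)
    (hz : z ∈ (ρ a).charpoly.roots) : z ∈ spectrum ℂ a := by
  apply AlgHom.spectrum_apply_subset ρ a
  exact Matrix.mem_spectrum_of_isRoot_charpoly (Polynomial.isRoot_of_mem_roots hz)

lemma tr_nonneg (ρ : A →ₐ[ℂ] Matrix (Fin n) (Fin n) ℂ) (a : A) :
    0 ≤ (ρ (star a * a)).trace := by
  rw [Matrix.trace_eq_sum_roots_charpoly]
  apply Multiset.sum_nonneg
  intro z hz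
  have h := root_mem ρ _ z hz
  have h2 := (IsSelfAdjoint.star_mul_self a).mem_spectrum_eq_re h
  rw [h2] at h ⊢
  have := spectrum_star_mul_self_nonneg (b := a) z.re
    ((spectrum.algebraMap_mem_iff ℂ (R := ℝ)).1 h)
  exact_mod_cast this

lemma tr_real (ρ : A →ₐ[ℂ] Matrix (Fin n) (Fin n) ℂ) (a : A) (ha : IsSelfAdjoint a) :
    star (ρ a).trace = (ρ a).trace := by
  rw [Matrix.trace_eq_sum_roots_charpoly, ← starRingEnd_apply, map_multiset_sum]
  congr 1
  conv_rhs => rw [← Multiset.map_id (ρ a).charpoly.roots]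
  apply Multiset.map_congr rfl
  intro z hz
  have h2 := ha.mem_spectrum_eq_re (root_mem ρ _ z hz)
  rw [h2]; simp

lemma tr_star (ρ : A →ₐ[ℂ] Matrix (Fin n) (Fin n) ℂ) (a : A) :
    (ρ (star a)).trace = star (ρ a).trace := by
  have h1 := tr_real ρ _ (realPart a).2
  have h2 := tr_real ρ _ (imaginaryPart a).2
  have h3 := realPart_add_I_smul_imaginaryPart a
  have h4 : star a = (realPart a : A) - Complex.I • (imaginaryPart a : A) := by
    conv_lhs => rw [← h3]
    simp [(realPart a).2.star_eq, (imaginaryPart a).2.star_eq]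
    rw [sub_eq_add_neg]
  conv_rhs => rw [← h3]
  rw [h4]
  simp only [map_add, map_sub, map_smul, Matrix.trace_add, Matrix.trace_sub, Matrix.trace_smul,
    star_add, star_smul, h1, h2]
  simp [sub_eq_add_neg]

lemma tr_degen (ρ : A →ₐ[ℂ] Matrix (Fin n) (Fin n) ℂ) (hρ : Function.Surjective ρ) (a : A)
    (h : (ρ (star a * a)).trace = 0) : ρ a = 0 := by
  have key : ∀ b : A, (ρ (b * a)).trace = 0 := by
    intro b
    by_contra hne
    set z := (ρ (b * a)).trace with hz
    have hz' : (ρ (star a * star b)).trace = star z := by rw [← star_mul, tr_star]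
    have h1 : ∀ t : ℝ, 0 ≤ -(2 * t * Complex.normSq z) + ((ρ (b * star b)).trace).re := by
      intro t
      have := tr_nonneg ρ (star b - ((t:ℂ) * star z) • a)
      have h2 : (ρ (star (star b - ((t:ℂ) * star z) • a) * (star b - ((t:ℂ) * star z) • a))).trace
        = (ρ (b * star b)).trace - (t * star z) * z - (t * z) * star z := by
        simp only [star_sub, star_star, star_smul, star_mul', sub_mul, mul_sub, map_sub,
          smul_mul_assoc, mul_smul_comm, map_smul, Matrix.trace_sub, Matrix.trace_smul, h, hz',
          ← hz]
        simp
        ring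
      rw [h2] at this
      have := (Complex.le_def.1 this).1
      simp [Complex.normSq_apply] at this ⊢
      linarith
    have hp : 0 < Complex.normSq z := Complex.normSq_pos.2 hne
    have := h1 ((((ρ (b * star b)).trace).re + 1) / (2 * Complex.normSq z))
    field_simp at this
    linarith
  apply (Matrix.ext_iff_trace_mul_left).2 
  intro x
  obtain ⟨b, rfl⟩ := hρ x
  simpa using key b
end BJC

namespace BJC
open scoped ComplexOrder

abbrev EE (n : ℕ) := EuclideanSpace ℂ (Fin n)
abbrev BE (n : ℕ) := EE n →L[ℂ] EE n
abbrev PB {ι : Type} (d : ι → ℕ) := (i : ι) → BE (d i)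

lemma core_equiv {V : Type*} [AddCommGroup V] [Module ℂ V] [FiniteDimensional ℂ V] {n : ℕ}
    (hn : Module.finrank ℂ V = n) (c : InnerProductSpace.Core ℂ V) :
    ∃ e : V ≃ₗ[ℂ] EE n, ∀ v w, inner ℂ (e v) (e w) = c.inner v w := by
  let : NormedAddCommGroup V := @InnerProductSpace.Core.toNormedAddCommGroup ℂ V _ _ _ c
  let : InnerProductSpace ℂ V := InnerProductSpace.ofCore c.toCore
  let b := (stdOrthonormalBasis ℂ V).reindex (finCongr hn)
  refine ⟨b.repr.toLinearEquiv, fun v w => ?_⟩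
  exact b.repr.inner_map_map v w

lemma block {A : Type*} [CStarAlgebra A] {n : ℕ} [NeZero n]
    (ρ : A →ₐ[ℂ] Matrix (Fin n) (Fin n) ℂ) (hρ : Function.Surjective ρ) :
    ∃ θ : Matrix (Fin n) (Fin n) ℂ ≃ₐ[ℂ] BE n, ∀ a, θ (ρ (star a)) = star (θ (ρ a)) := by
  obtain ⟨s, hs⟩ := LinearMap.exists_rightInverse_of_surjective ρ.toLinearMap
    (LinearMap.range_eq_top.2 hρ)
  have hs' : ∀ M, ρ (s M) = M := fun M => congrArg (fun f => f M) hs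
  have dep : ∀ x y x' y', ρ x = ρ x' → ρ y = ρ y' →
      (ρ (star x * y)).trace = (ρ (star x' * y')).trace := by
    intro x y x' y' h1 h2
    have e1 : (ρ (star x * y)).trace = (ρ (star x * y')).trace := by simp [h2]
    have e2 : (ρ (star y' * x)).trace = (ρ (star y' * x')).trace := by simp [h1]
    have e3 : ∀ x, (ρ (star x * y')).trace = star (ρ (star y' * x)).trace := by
      intro x; rw [← tr_star]; simp
    rw [e1, e3, e3, e2]
  let col : (Fin n → ℂ) →ₗ[ℂ] Matrix (Fin n) (Fin n) ℂ :=
    { toFun := fun v => Matrix.vecMulVec v (Pi.single 0 1)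
      map_add' := fun v w => Matrix.add_vecMulVec _ _ _
      map_smul' := fun c v => Matrix.smul_vecMulVec _ _ _ }
  have hcol : ∀ M v, col (Matrix.mulVec M v) = M * col v := by
    intro M v
    exact (Matrix.mul_vecMulVec _ _ _).symm
  have hcol0 : ∀ v, col v = 0 → v = 0 := by
    intro v hv
    ext i
    have := congrFun (congrFun hv i) 0
    simpa [col, Matrix.vecMulVec_apply] using this
  let c : InnerProductSpace.Core ℂ (Fin n → ℂ) :=
    { inner := fun v w => (ρ (star (s (col v)) * s (col w))).trace
      conj_inner_symm := by
        intro x y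
        rw [starRingEnd_apply, ← tr_star]; simp
      re_inner_nonneg := fun x => (Complex.le_def.1 (tr_nonneg ρ (s (col x)))).1
      add_left := by
        intro x y z
        simp [add_mul]
      smul_left := by
        intro x y r
        simp
      definite := by
        intro x hx
        have := tr_degen ρ hρ _ hx
        rw [hs'] at this
        exact hcol0 x this }
  obtain ⟨e, he⟩ := core_equiv (n := n) (by simp) c
  refine ⟨(Matrix.toLinAlgEquiv' (R := ℂ)).trans ((e.conjAlgEquiv ℂ).trans
    (Module.End.toContinuousLinearMap (EE n))), fun a => ?_⟩
  rw [ContinuousLinearMap.star_eq_adjoint, ContinuousLinearMap.eq_adjoint_iff]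
  intro x y
  obtain ⟨v, rfl⟩ := e.surjective x
  obtain ⟨w, rfl⟩ := e.surjective y
  have happ : ∀ M v, ((Matrix.toLinAlgEquiv' (R := ℂ)).trans ((e.conjAlgEquiv ℂ).trans
    (Module.End.toContinuousLinearMap (EE n)))) M (e v) = e (Matrix.mulVec M v) := by
    intro M v
    simp [Module.End.toContinuousLinearMap, LinearEquiv.conjAlgEquiv_apply]
  rw [happ, happ, he, he]
  change (ρ (star (s (col _)) * s (col _))).trace = (ρ (star (s (col _)) * s (col _))).trace
  rw [dep _ _ (star a * s (col v)) (s (col w)) (by simp [hs', hcol]) rfl,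
    dep _ (s (col (Matrix.mulVec (ρ a) w))) (s (col v)) (a * s (col w)) rfl (by simp [hs', hcol])]
  simp [mul_assoc]

lemma structure_unital {A : Type*} [CStarAlgebra A] [FiniteDimensional ℂ A] :
    ∃ (k : ℕ) (d : Fin k → ℕ), (∀ i, NeZero (d i)) ∧ Nonempty (A ≃⋆ₐ[ℂ] PB d) := by
  have := semisimple (A := A)
  obtain ⟨k, d, hd, ⟨Φ⟩⟩ := IsSemisimpleRing.exists_algEquiv_pi_matrix_of_isAlgClosed (F := ℂ) (R := A)
  refine ⟨k, d, hd, ?_⟩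
  have hsurj : ∀ i, Function.Surjective
      ((Pi.evalAlgHom ℂ (fun i => Matrix (Fin (d i)) (Fin (d i)) ℂ) i).comp Φ.toAlgHom) := by
    intro i
    exact (Function.surjective_eval i).comp Φ.surjective
  choose θ hθ using fun i => block _ (hsurj i)
  let Ψ : A ≃ₐ[ℂ] PB d := Φ.trans (AlgEquiv.piCongrRight θ)
  have hst : ∀ a, Ψ (star a) = star (Ψ a) := by
    intro a
    funext i
    exact hθ i a
  exact ⟨StarAlgEquiv.ofAlgEquiv Ψ hst⟩

lemma exists_unit {A : Type*} [NonUnitalCStarAlgebra A] [FiniteDimensional ℂ A] :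
    ∃ e : A, ∀ a, e * a = a ∧ a * e = a := by
  let := CStarAlgebra.spectralOrder A
  let := CStarAlgebra.spectralOrderedRing A
  have hl := CStarAlgebra.increasingApproximateUnit A
  have : ProperSpace A := FiniteDimensional.proper ℂ A
  have hK : IsCompact (Metric.closedBall (0 : A) 1) := isCompact_closedBall _ _
  obtain ⟨U, hU⟩ := Ultrafilter.exists_le (CStarAlgebra.approximateUnit A)
  have hmem : Metric.closedBall (0 : A) 1 ∈ (U : Filter A) := by
    apply hU
    filter_upwards [hl.eventually_norm] with x hx
    simpa using hx
  obtain ⟨e, -, he⟩ := hK.ultrafilter_le_nhds U (Filter.le_principal_iff.2 hmem)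
  refine ⟨e, fun a => ⟨?_, ?_⟩⟩
  · have h1 := (hl.tendsto_mul_right a).mono_left hU
    have h2 : Filter.Tendsto (fun x => x * a) U (nhds (e * a)) :=
      ((continuous_id.mul continuous_const).tendsto e).mono_left he
    exact tendsto_nhds_unique h2 h1
  · have h1 := (hl.tendsto_mul_left a).mono_left hU
    have h2 : Filter.Tendsto (fun x => a * x) U (nhds (a * e)) :=
      ((continuous_const.mul continuous_id).tendsto e).mono_left he
    exact tendsto_nhds_unique h2 h1

lemma structure_thm {A : Type*} [inst : NonUnitalCStarAlgebra A] [FiniteDimensional ℂ A] :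
    ∃ (k : ℕ) (d : Fin k → ℕ), (∀ i, NeZero (d i)) ∧ Nonempty (A ≃⋆ₐ[ℂ] PB d) := by
  obtain ⟨e, he⟩ := exists_unit (A := A)
  let hR : Ring A :=
    { (inferInstance : NonUnitalRing A) with
      one := e
      one_mul := fun a => (he a).1
      mul_one := fun a => (he a).2 }
  let hA : Algebra ℂ A := Algebra.ofModule (fun r x y => smul_mul_assoc r x y)
    (fun r x y => mul_smul_comm r x y)
  let hN : NormedRing A := { inst, hR with }
  let hC : CStarAlgebra A := { inst, hN, hA with }
  exact structure_unital (A := A)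
end BJC

namespace BJC

section gen
variable {E : Type*} [NormedAddCommGroup E] [NormedSpace ℂ E]

lemma bj_of_functional (f : E →L[ℂ] ℂ) (hf : ‖f‖ ≤ 1) (x : E) (hx : ‖f x‖ = ‖x‖) (y : E)
    (hy : f y = 0) : BJOrth x y := by
  intro c
  have h1 : f (x + c • y) = f x := by simp [hy]
  calc ‖x‖ = ‖f (x + c • y)‖ := by rw [h1, hx]
    _ ≤ ‖f‖ * ‖x + c • y‖ := f.le_opNorm _
    _ ≤ 1 * ‖x + c • y‖ := by gcongr
    _ = _ := one_mul _

lemma bj_self (x : E) : BJOrth x x ↔ x = 0 := by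
  constructor
  · intro h
    have := h (-1)
    simpa using this
  · rintro rfl c
    simp

lemma bj_zero_right (x : E) : BJOrth x 0 := by intro c; simp

lemma exists_finset [FiniteDimensional ℂ E] :
    ∃ t : Finset E, ∀ y : E, (∀ x ∈ t, BJOrth x y) → y = 0 := by
  have : ProperSpace E := FiniteDimensional.proper ℂ E
  have hK : IsCompact (Metric.sphere (0 : E) 1) := isCompact_sphere _ _
  obtain ⟨t, ht⟩ := hK.elim_finite_subcover (fun x : E => {y : E | ¬ BJOrth x y}) (by
      intro x
      have : IsClosed {y : E | BJOrth x y} := by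
        simp only [BJOrth, Set.ofPred_forall]
        refine isClosed_iInter fun c => isClosed_le continuous_const (by fun_prop)
      exact this.isOpen_compl) (by
      intro y hy
      refine Set.mem_iUnion.2 ⟨y, ?_⟩
      simp only [Set.mem_ofPred_eq, bj_self]
      rintro rfl
      simp at hy)
  refine ⟨t, fun y hy => ?_⟩
  by_contra hne
  have hn : ‖y‖ ≠ 0 := norm_ne_zero_iff.2 hne
  have : ((‖y‖ : ℂ)⁻¹ • y) ∈ Metric.sphere (0 : E) 1 := by
    simp [norm_smul, hn]
  obtain ⟨x, hx, h⟩ := Set.mem_iUnion₂.1 (ht this)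
  apply h
  intro c
  rw [smul_smul]
  exact hy x hx _

lemma finite_of_finset (t : Finset E) (ht : ∀ y : E, (∀ x ∈ t, BJOrth x y) → y = 0) :
    FiniteDimensional ℂ E := by
  choose g hg hgx using fun x : E => exists_dual_vector'' ℂ x
  let L : E →ₗ[ℂ] (t → ℂ) := LinearMap.pi fun x => (g x).toLinearMap
  refine FiniteDimensional.of_injective L ?_
  rw [← LinearMap.ker_eq_bot, eq_bot_iff]
  intro y hy
  refine ht y fun x hx => bj_of_functional (g x) (hg x) x ?_ y ?_
  · rw [hgx]; simp
  · exact congrFun hy ⟨x, hx⟩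
end gen

lemma fd_transfer {E F : Type*} [NormedAddCommGroup E] [NormedSpace ℂ E] [NormedAddCommGroup F]
    [NormedSpace ℂ F] [FiniteDimensional ℂ E] (φ : E → F) (hb : Function.Bijective φ)
    (h : ∀ u v, BJOrth u v ↔ BJOrth (φ u) (φ v)) : FiniteDimensional ℂ F := by
  classical
  obtain ⟨t, ht⟩ := exists_finset (E := E)
  refine finite_of_finset (t.image φ) fun y hy => ?_
  obtain ⟨z, rfl⟩ := hb.2 y
  have : z = 0 := ht z fun x hx => (h _ _).2 (hy _ (Finset.mem_image_of_mem _ hx))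
  rw [← bj_self, ← h, bj_self, this]

lemma block_ineq {H : Type*} [NormedAddCommGroup H] [InnerProductSpace ℂ H] (ξ η : H)
    (hξ : ‖ξ‖ = 1) (hη : ‖η‖ = 1) (b : H →L[ℂ] H) (hb : inner ℂ η (b ξ) = -1) (M : ℝ)
    (hM : ‖b‖ ≤ M) (t : ℝ) (ht : 0 < t) (ht' : t ≤ 1 / 4) (x : H) :
    ‖inner ℂ ξ x • η + (t : ℂ) • b x‖ ^ 2 ≤ (1 - 2 * t + 3 * t ^ 2 * M ^ 2) * ‖x‖ ^ 2 := by
  have hM0 : 0 ≤ M := (norm_nonneg b).trans hM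
  set α := inner ℂ ξ x with hα
  set x' := x - α • ξ with hx'
  have hx : x = α • ξ + x' := by simp [hx']
  have horth : inner ℂ ξ x' = 0 := by
    rw [hx', inner_sub_right, inner_smul_right, inner_self_eq_norm_sq_to_K, hξ]; simp [hα]
  have hnx : ‖x‖ ^ 2 = ‖α‖ ^ 2 + ‖x'‖ ^ 2 := by
    have := norm_add_sq_eq_norm_sq_add_norm_sq_of_inner_eq_zero (𝕜 := ℂ) (α • ξ) x'
      (by rw [inner_smul_left, horth, mul_zero])
    rw [← hx, norm_smul, hξ] at this
    nlinarith
  have hbx : ‖b x‖ ^ 2 ≤ M ^ 2 * (‖α‖ ^ 2 + ‖x'‖ ^ 2) := by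
    rw [← hnx, ← mul_pow]
    gcongr
    exact b.le_of_opNorm_le hM x
  have hbx' : ‖inner ℂ η (b x')‖ ≤ M * ‖x'‖ := by
    calc _ ≤ ‖η‖ * ‖b x'‖ := norm_inner_le_norm _ _
      _ ≤ 1 * (M * ‖x'‖) := by rw [hη]; gcongr; exact b.le_of_opNorm_le hM x'
      _ = _ := one_mul _
  have hin : inner ℂ (α • η) ((t : ℂ) • b x) =
      t * (-(‖α‖ ^ 2 : ℝ) + (starRingEnd ℂ α) * inner ℂ η (b x')) := by
    conv_lhs => rw [hx]
    rw [map_add, map_smul, inner_smul_left, inner_smul_right, inner_add_right, inner_smul_right, hb]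
    have : (starRingEnd ℂ α) * α = ((‖α‖ ^ 2 : ℝ) : ℂ) := by
      rw [Complex.conj_mul']; push_cast; rfl
    rw [← this]; ring
  have hre : (inner ℂ (α • η) ((t : ℂ) • b x)).re ≤ t * (-(‖α‖ ^ 2) + ‖α‖ * (M * ‖x'‖)) := by
    rw [hin, Complex.re_ofReal_mul]
    gcongr
    rw [Complex.add_re, Complex.neg_re, Complex.ofReal_re]
    gcongr
    refine (Complex.re_le_norm _).trans ?_
    rw [norm_mul, RCLike.norm_conj]
    gcongr
  have hexp := norm_add_sq (𝕜 := ℂ) (α • η) ((t : ℂ) • b x)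
  rw [hexp, hnx, norm_smul, norm_smul, hη]
  have e1 : ‖(t : ℂ)‖ = t := by simp [abs_of_pos ht]
  rw [e1]
  simp only [RCLike.re_to_complex]
  set a := ‖α‖
  set s := ‖x'‖
  have h3 : t ^ 2 * ‖b x‖ ^ 2 ≤ t ^ 2 * (M ^ 2 * (a ^ 2 + s ^ 2)) := by gcongr
  nlinarith [sq_nonneg (2 * t * M * a - s), sq_nonneg s, mul_nonneg (sub_nonneg.2 ht') (sq_nonneg s),
    sq_nonneg (t * M * s)]

structure Idx {k : ℕ} (d : Fin k → ℕ) where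
  i : Fin k
  ξ : EE (d i)
  η : EE (d i)
  hξ : ‖ξ‖ = 1
  hη : ‖η‖ = 1

variable {k : ℕ} {d : Fin k → ℕ}

noncomputable def fn (p : Idx d) : Module.Dual ℂ (PB d) where
  toFun b := inner ℂ p.η (b p.i p.ξ)
  map_add' a b := by simp [inner_add_right]
  map_smul' c b := by simp [inner_smul_right]

lemma fn_apply (p : Idx d) (b : PB d) : fn p b = inner ℂ p.η (b p.i p.ξ) := rfl

lemma fn_norm (p : Idx d) (b : PB d) : ‖fn p b‖ ≤ 1 * ‖b‖ := by
  rw [fn_apply]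
  calc _ ≤ ‖p.η‖ * ‖b p.i p.ξ‖ := norm_inner_le_norm _ _
    _ ≤ ‖p.η‖ * (‖b p.i‖ * ‖p.ξ‖) := by gcongr; exact (b p.i).le_opNorm _
    _ ≤ 1 * ‖b‖ := by rw [p.hη, p.hξ, mul_one]; gcongr; exact norm_le_pi_norm b p.i

lemma bj_of_fn (p : Idx d) (a b : PB d) (ha : ‖fn p a‖ = ‖a‖) (hb : fn p b = 0) : BJOrth a b :=
  bj_of_functional ((fn p).mkContinuous 1 (fn_norm p))
    (LinearMap.mkContinuous_norm_le _ zero_le_one _) a ha b hb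

lemma exists_idx (a : PB d) (ha : a ≠ 0) : ∃ p : Idx d, ∀ b, fn p b = 0 → BJOrth a b := by
  have hne : Nonempty (Fin k) := by
    by_contra h
    rw [not_nonempty_iff] at h
    exact ha (Subsingleton.elim _ _)
  obtain ⟨i, hi⟩ := Finite.exists_max fun i => ‖a i‖
  have hai : ‖a i‖ = ‖a‖ := le_antisymm (norm_le_pi_norm a i)
    ((pi_norm_le_iff_of_nonneg (norm_nonneg _)).2 hi)
  have hpos : 0 < ‖a i‖ := by rw [hai]; exact norm_pos_iff.2 ha
  have hnt : Nontrivial (EE (d i)) := by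
    by_contra h
    rw [not_nontrivial_iff_subsingleton] at h
    have : a i = 0 := by ext x; simp [Subsingleton.elim x 0]
    simp [this] at hpos
  obtain ⟨ξ, hξ, hmax⟩ := (isCompact_sphere (0 : EE (d i)) 1).exists_isMaxOn
    (NormedSpace.sphere_nonempty.2 zero_le_one) (f := fun x => ‖a i x‖) (by fun_prop)
  have hξ1 : ‖ξ‖ = 1 := by simpa using hξ
  have hatt : ‖a i ξ‖ = ‖a i‖ := by
    apply le_antisymm
    · have := (a i).le_opNorm ξ
      rwa [hξ1, mul_one] at this
    · refine ContinuousLinearMap.opNorm_le_of_unit_norm (𝕜 := ℂ) (norm_nonneg _) fun x hx => ?_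
      exact hmax (by simpa using hx)
  have hc : ‖a i‖ ≠ 0 := hpos.ne'
  refine ⟨⟨i, ξ, (‖a i‖ : ℂ)⁻¹ • a i ξ, hξ1, ?_⟩, fun b hb => bj_of_fn _ a b ?_ hb⟩
  · rw [norm_smul, hatt]; simp [hc]
  · rw [fn_apply]
    simp only
    rw [inner_smul_left, inner_self_eq_norm_sq_to_K, hatt]
    simp [hai] at hc ⊢
    field_simp

noncomputable def rk (p : Idx d) : PB d :=
  Pi.single p.i (InnerProductSpace.rankOne ℂ p.η p.ξ)

lemma fn_rk (p : Idx d) : fn p (rk p) = 1 := by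
  rw [fn_apply, rk, Pi.single_eq_same]
  simp [InnerProductSpace.rankOne_apply, inner_smul_right, inner_self_eq_norm_sq_to_K, p.hξ, p.hη]

lemma norm_rk (p : Idx d) : ‖rk p‖ = 1 := by
  apply le_antisymm
  · refine (pi_norm_le_iff_of_nonneg zero_le_one).2 fun j => ?_
    unfold rk
    by_cases h : j = p.i
    · subst h
      rw [Pi.single_eq_same]
      simp [p.hξ, p.hη]
    · rw [Pi.single_eq_of_ne h]; simp
  · have := fn_norm p (rk p)
    rw [fn_rk] at this
    simpa using this

lemma rk_orth (p : Idx d) (b : PB d) : BJOrth (rk p) b ↔ fn p b = 0 := by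
  constructor
  · intro h
    by_contra hw
    set w := fn p b with hwdef
    set b' : PB d := (-w⁻¹) • b with hb'
    set M := ‖b'‖ with hM
    have hM0 : 0 ≤ M := norm_nonneg _
    set t : ℝ := 1 / (4 * (M ^ 2 + 1)) with ht
    have htM : t * (4 * (M ^ 2 + 1)) = 1 := by rw [ht]; field_simp
    have ht0 : 0 < t := by positivity
    have ht4 : t ≤ 1 / 4 := by nlinarith [sq_nonneg M]
    have hlt : ‖rk p + (t : ℂ) • b'‖ < 1 := by
      rw [pi_norm_lt_iff zero_lt_one]
      intro j
      rw [Pi.add_apply, Pi.smul_apply]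
      have hbj : ‖b' j‖ ≤ M := norm_le_pi_norm b' j
      by_cases hj : j = p.i
      · subst hj
        have hin : inner ℂ p.η (b' p.i p.ξ) = -1 := by
          rw [← fn_apply, hb', map_smul, ← hwdef, smul_eq_mul]
          field_simp
        have hq : 1 - 2 * t + 3 * t ^ 2 * M ^ 2 < 1 := by nlinarith
        have hq0 : 0 ≤ 1 - 2 * t + 3 * t ^ 2 * M ^ 2 := by nlinarith [sq_nonneg (t * M)]
        refine lt_of_le_of_lt (b := Real.sqrt (1 - 2 * t + 3 * t ^ 2 * M ^ 2)) ?_ ?_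
        · refine ContinuousLinearMap.opNorm_le_bound _ (Real.sqrt_nonneg _) fun x => ?_
          have := block_ineq p.ξ p.η p.hξ p.hη (b' p.i) hin M hbj t ht0 ht4 x
          rw [← Real.sqrt_sq (norm_nonneg x), ← Real.sqrt_mul hq0]
          apply Real.le_sqrt_of_sq_le
          have hx : (rk p p.i + (t : ℂ) • b' p.i) x
              = inner ℂ p.ξ x • p.η + (t : ℂ) • b' p.i x := by
            rw [rk, Pi.single_eq_same]
            simp [InnerProductSpace.rankOne_apply]
          rw [hx]
          exact this
        · rw [Real.sqrt_lt' one_pos]; simpa using hq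
      · rw [rk, Pi.single_eq_of_ne hj, zero_add, norm_smul]
        have e1 : ‖(t : ℂ)‖ = t := by simp [abs_of_pos ht0]
        rw [e1]
        nlinarith [sq_nonneg (M - 1)]
    have := h ((t : ℂ) * (-w⁻¹))
    rw [norm_rk, mul_smul, ← hb'] at this
    linarith
  · intro h
    exact bj_of_fn p _ _ (by rw [fn_rk, norm_rk]; simp) h

end BJC

namespace BJC

lemma mem_span_iff {V : Type*} [AddCommGroup V] [Module ℂ V] [FiniteDimensional ℂ V]
    (S : Set (Module.Dual ℂ V)) (f : Module.Dual ℂ V) :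
    f ∈ Submodule.span ℂ S ↔ ∀ y, (∀ g ∈ S, g y = 0) → f y = 0 := by
  constructor
  · intro hf y hy
    induction hf using Submodule.span_induction with
    | mem x h => exact hy x h
    | zero => simp
    | add a b _ _ ha hb => simp [ha, hb]
    | smul c a _ ha => simp [ha]
  · intro h
    rw [← Subspace.dualCoannihilator_dualAnnihilator_eq (W := Submodule.span ℂ S),
      Submodule.mem_dualAnnihilator]
    intro y hy
    rw [Submodule.mem_dualCoannihilator] at hy
    exact h y fun g hg => hy g (Submodule.subset_span hg)

variable {k k' : ℕ} {d : Fin k → ℕ} {d' : Fin k' → ℕ}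

lemma fn_ne (p : Idx d) : fn p ≠ 0 := by
  intro h
  have := fn_rk p
  simp [h] at this

lemma ker_eq {V : Type*} [AddCommGroup V] [Module ℂ V] (f g : Module.Dual ℂ V) (hg : g ≠ 0)
    (h : ∀ y, f y = 0 → g y = 0) : ∀ y, g y = 0 → f y = 0 := by
  intro y hy
  obtain ⟨z, hz⟩ : ∃ z, g z ≠ 0 := by
    by_contra hc
    push Not at hc
    exact hg (LinearMap.ext hc)
  have hfz : f z ≠ 0 := fun h0 => hz (h z h0)
  have h1 := h (y - (f y / f z) • z) (by simp [hfz])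
  simp [hy, hz, hfz] at h1
  exact h1

lemma exists_match (ψ : PB d ≃ PB d') (h : ∀ u v, BJOrth u v ↔ BJOrth (ψ u) (ψ v)) (p : Idx d) :
    ∃ q : Idx d', ∀ y, fn p y = 0 ↔ fn q (ψ y) = 0 := by
  have hne : ψ (rk p) ≠ 0 := by
    rw [ne_eq, ← bj_self, ← h, rk_orth, fn_rk]; simp
  obtain ⟨q, hq⟩ := exists_idx _ hne
  have hne' : ψ.symm (rk q) ≠ 0 := by
    rw [ne_eq, ← bj_self, h, ψ.apply_symm_apply, rk_orth, fn_rk]; simp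
  obtain ⟨p', hp'⟩ := exists_idx _ hne'
  have e1 : ∀ y, fn q (ψ y) = 0 → fn p y = 0 := fun y hy => by
    rw [← rk_orth, h]; exact hq _ hy
  have e2 : ∀ y, fn p' y = 0 → fn q (ψ y) = 0 := fun y hy => by
    have := hp' y hy
    rwa [h, ψ.apply_symm_apply, rk_orth] at this
  have e3 := ker_eq (fn p') (fn p) (fn_ne p) fun y hy => e1 y (e2 y hy)
  exact ⟨q, fun y => ⟨fun hy => e2 y (e3 y hy), e1 y⟩⟩

lemma transfer (ψ : PB d ≃ PB d') (σ : Idx d → Idx d')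
    (hσ : ∀ p y, fn p y = 0 ↔ fn (σ p) (ψ y) = 0) (P : Set (Idx d)) (p : Idx d) :
    fn p ∈ Submodule.span ℂ (fn '' P) ↔ fn (σ p) ∈ Submodule.span ℂ (fn '' (σ '' P)) := by
  rw [mem_span_iff, mem_span_iff]
  simp only [Set.forall_mem_image]
  constructor
  · intro h y hy
    obtain ⟨y, rfl⟩ := ψ.surjective y
    rw [← hσ]
    exact h y fun q hq => (hσ q y).2 (hy hq)
  · intro h y hy
    rw [hσ]
    exact h _ fun q hq => (hσ q y).1 (hy hq)

lemma fn_rk_ne (p q : Idx d) (h : p.i ≠ q.i) : fn p (rk q) = 0 := by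
  rw [fn_apply, rk, Pi.single_eq_of_ne h]; simp

def Rel (p q : Idx d) : Prop :=
  fn q ∈ Submodule.span ℂ (fn '' {p}) ∨ ∃ r, fn r ∈ Submodule.span ℂ (fn '' {p, q}) ∧
    fn r ∉ Submodule.span ℂ (fn '' {p}) ∧ fn r ∉ Submodule.span ℂ (fn '' {q})

lemma Rel.map (ψ : PB d ≃ PB d') (σ : Idx d → Idx d')
    (hσ : ∀ p y, fn p y = 0 ↔ fn (σ p) (ψ y) = 0) {p q : Idx d} (h : Rel p q) :
    Rel (σ p) (σ q) := by
  rcases h with h | ⟨r, h1, h2, h3⟩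
  · left
    rw [transfer ψ σ hσ] at h
    simpa using h
  · right
    refine ⟨σ r, ?_, ?_, ?_⟩
    · rw [transfer ψ σ hσ, Set.image_pair] at h1; exact h1
    · rw [transfer ψ σ hσ, Set.image_singleton] at h2; exact h2
    · rw [transfer ψ σ hσ, Set.image_singleton] at h3; exact h3

lemma Rel.same {p q : Idx d} (h : Rel p q) : p.i = q.i := by
  by_contra hne
  simp only [Rel, Set.image_singleton, Set.image_pair, Submodule.mem_span_singleton,
    Submodule.mem_span_pair] at h
  rcases h with ⟨c, hc⟩ | ⟨r, ⟨α, β, hr⟩, h2, h3⟩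
  · have := congrArg (fun f => f (rk q)) hc
    simp [fn_rk, fn_rk_ne p q hne] at this
  · by_cases hrp : r.i = p.i
    · have := congrArg (fun f => f (rk q)) hr
      simp [fn_rk, fn_rk_ne p q hne, fn_rk_ne r q (hrp ▸ hne)] at this
      exact h2 ⟨α, by rw [← hr, this]; simp⟩
    · have := congrArg (fun f => f (rk p)) hr
      simp [fn_rk, fn_rk_ne q p (Ne.symm hne), fn_rk_ne r p hrp] at this
      exact h3 ⟨β, by rw [← hr, this]; simp⟩

lemma rel_of_par {p q : Idx d} (h : ∃ c : ℂ, c • fn p = fn q) : Rel p q := by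
  left
  rw [Set.image_singleton, Submodule.mem_span_singleton]; exact h

lemma rel_of_sum {p q : Idx d} (r : Idx d) (α β : ℂ) (hα : α ≠ 0) (hβ : β ≠ 0)
    (h : fn r = α • fn p + β • fn q) : Rel p q := by
  by_cases hpar : ∃ c : ℂ, c • fn p = fn q
  · exact rel_of_par hpar
  right
  refine ⟨r, ?_, ?_, ?_⟩
  · rw [Set.image_pair, Submodule.mem_span_pair]; exact ⟨α, β, h.symm⟩
  · rw [Set.image_singleton, Submodule.mem_span_singleton]
    rintro ⟨c, hc⟩
    apply hpar
    refine ⟨β⁻¹ * (c - α), ?_⟩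
    rw [mul_smul, sub_smul, hc, h]
    simp [smul_smul, hβ]
  · rw [Set.image_singleton, Submodule.mem_span_singleton]
    rintro ⟨c, hc⟩
    have h1 : α • fn p = (c - β) • fn q := by rw [sub_smul, hc, h]; simp
    by_cases hcb : c - β = 0
    · rw [hcb, zero_smul] at h1
      exact (smul_ne_zero hα (fn_ne p)) h1
    · apply hpar
      refine ⟨(c - β)⁻¹ * α, ?_⟩
      rw [mul_smul, h1, smul_smul, inv_mul_cancel₀ hcb, one_smul]

lemma rel_eta (i : Fin k) (ξ η η' : EE (d i)) (hξ : ‖ξ‖ = 1) (hη : ‖η‖ = 1) (hη' : ‖η'‖ = 1) :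
    Rel (⟨i, ξ, η, hξ, hη⟩ : Idx d) ⟨i, ξ, η', hξ, hη'⟩ := by
  by_cases h0 : η + η' = 0
  · apply rel_of_par
    refine ⟨-1, LinearMap.ext fun b => ?_⟩
    simp [fn_apply, eq_neg_of_add_eq_zero_right h0]
  · have hn : ‖η + η'‖ ≠ 0 := norm_ne_zero_iff.2 h0
    have hn' : (‖η + η'‖ : ℂ) ≠ 0 := by exact_mod_cast hn
    refine rel_of_sum ⟨i, ξ, (‖η + η'‖ : ℂ)⁻¹ • (η + η'), hξ, ?_⟩ (‖η + η'‖ : ℂ)⁻¹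
      (‖η + η'‖ : ℂ)⁻¹ (inv_ne_zero hn') (inv_ne_zero hn') (LinearMap.ext fun b => ?_)
    · rw [norm_smul]; simp [hn]
    · simp only [fn_apply, LinearMap.add_apply, LinearMap.smul_apply, inner_smul_left,
        inner_add_left, map_inv₀, Complex.conj_ofReal, smul_eq_mul, mul_add]

lemma rel_xi (i : Fin k) (ξ ξ' η : EE (d i)) (hξ : ‖ξ‖ = 1) (hξ' : ‖ξ'‖ = 1) (hη : ‖η‖ = 1) :
    Rel (⟨i, ξ, η, hξ, hη⟩ : Idx d) ⟨i, ξ', η, hξ', hη⟩ := by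
  by_cases h0 : ξ + ξ' = 0
  · apply rel_of_par
    refine ⟨-1, LinearMap.ext fun b => ?_⟩
    simp [fn_apply, eq_neg_of_add_eq_zero_right h0]
  · have hn : ‖ξ + ξ'‖ ≠ 0 := norm_ne_zero_iff.2 h0
    have hn' : (‖ξ + ξ'‖ : ℂ) ≠ 0 := by exact_mod_cast hn
    refine rel_of_sum ⟨i, (‖ξ + ξ'‖ : ℂ)⁻¹ • (ξ + ξ'), η, ?_, hη⟩ (‖ξ + ξ'‖ : ℂ)⁻¹
      (‖ξ + ξ'‖ : ℂ)⁻¹ (inv_ne_zero hn') (inv_ne_zero hn') (LinearMap.ext fun b => ?_)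
    · rw [norm_smul]; simp [hn]
    · simp only [fn_apply, LinearMap.add_apply, LinearMap.smul_apply, map_smul, map_add,
        inner_smul_right, inner_add_right, smul_eq_mul, mul_add]

lemma same_map (ψ : PB d ≃ PB d') (σ : Idx d → Idx d')
    (hσ : ∀ p y, fn p y = 0 ↔ fn (σ p) (ψ y) = 0) {p q : Idx d} (h : p.i = q.i) :
    (σ p).i = (σ q).i := by
  obtain ⟨i, ξ, η, hξ, hη⟩ := p
  obtain ⟨j, ξ', η', hξ', hη'⟩ := q
  obtain rfl : i = j := h
  exact ((rel_eta i ξ η η' hξ hη hη').map ψ σ hσ).same.trans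
    ((rel_xi i ξ ξ' η' hξ hξ' hη').map ψ σ hσ).same

lemma finrank_BE (n : ℕ) : Module.finrank ℂ (BE n) = n * n := by
  rw [← (Module.End.toContinuousLinearMap (EE n)).toLinearEquiv.finrank_eq,
    Module.finrank_linearMap]
  simp

lemma finrank_block (i : Fin k) :
    Module.finrank ℂ (Submodule.span ℂ (fn '' {p : Idx d | p.i = i})) = d i * d i := by
  set W := Submodule.span ℂ (fn '' {p : Idx d | p.i = i}) with hW
  have h1 := Subspace.finrank_add_finrank_dualCoannihilator_eq W
  let π : PB d →ₗ[ℂ] BE (d i) := LinearMap.proj i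
  have h2 : W.dualCoannihilator = LinearMap.ker π := by
    ext b
    rw [Submodule.mem_dualCoannihilator, LinearMap.mem_ker]
    constructor
    · intro hb
      ext1 x
      by_contra hne
      have hx : x ≠ 0 := by rintro rfl; exact hne (by simp)
      have hx1 : ‖x‖ ≠ 0 := norm_ne_zero_iff.2 hx
      have hy1 : ‖π b x‖ ≠ 0 := norm_ne_zero_iff.2 hne
      have := hb (fn ⟨i, (‖x‖ : ℂ)⁻¹ • x, (‖π b x‖ : ℂ)⁻¹ • π b x, by rw [norm_smul]; simp [hx1],
        by rw [norm_smul, norm_inv, Complex.norm_real, norm_norm, inv_mul_cancel₀ hy1]⟩)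
        (Submodule.subset_span ⟨_, rfl, rfl⟩)
      rw [fn_apply] at this
      change inner ℂ ((‖π b x‖ : ℂ)⁻¹ • π b x) (π b ((‖x‖ : ℂ)⁻¹ • x)) = 0 at this
      rw [map_smul, inner_smul_left, inner_smul_right, inner_self_eq_norm_sq_to_K] at this
      simp [hx] at this
      exact hne this
    · intro hb f hf
      induction hf using Submodule.span_induction with
      | mem x h =>
        obtain ⟨p, rfl, rfl⟩ := h
        have hb' : b p.i = 0 := hb
        rw [fn_apply, hb']; simp
      | zero => simp
      | add a b _ _ ha hb => simp [ha, hb]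
      | smul c a _ ha => simp [ha]
  have h3 := LinearMap.finrank_range_add_finrank_ker π
  have h4 : LinearMap.range π = ⊤ := LinearMap.range_eq_top.2 (LinearMap.proj_surjective i)
  rw [h4, finrank_top, finrank_BE] at h3
  rw [h2] at h1
  omega

lemma rank_le (ψ : PB d ≃ PB d') (σ : Idx d → Idx d')
    (hσ : ∀ p y, fn p y = 0 ↔ fn (σ p) (ψ y) = 0) (τ : Idx d' → Idx d)
    (hτ : ∀ q y, fn q y = 0 ↔ fn (τ q) (ψ.symm y) = 0) (i : Fin k) (j : Fin k')
    (hij : ∀ q : Idx d', q.i = j → (τ q).i = i) : d' j * d' j ≤ d i * d i := by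
  classical
  rw [← finrank_block (d := d) i, ← finrank_block (d := d') j]
  obtain ⟨f, hf, hspan, -⟩ := Submodule.exists_fun_fin_finrank_span_eq ℂ
    (fn '' {p : Idx d | p.i = i})
  choose P hP hfP using hf
  have hfr : Set.range f = fn '' (Set.range P) := by
    rw [← Set.range_comp]; congr 1; funext x; exact (hfP x).symm
  have hle : Submodule.span ℂ (fn '' {p : Idx d' | p.i = j}) ≤
      Submodule.span ℂ (Set.range (fun x => fn (σ (P x)))) := by
    rw [Submodule.span_le]
    rintro _ ⟨q, hq, rfl⟩
    have h1 : fn (τ q) ∈ Submodule.span ℂ (fn '' (Set.range P)) := by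
      rw [← hfr, hspan]
      exact Submodule.subset_span ⟨_, hij q hq, rfl⟩
    rw [transfer ψ σ hσ, ← Set.range_comp, ← Set.range_comp] at h1
    rw [mem_span_iff] at h1
    rw [SetLike.mem_coe, mem_span_iff]
    intro y hy
    have h2 := h1 y hy
    rw [hτ, hσ]
    simpa using h2
  calc _ ≤ _ := Submodule.finrank_mono hle
    _ ≤ Fintype.card (Fin _) := finrank_range_le_card _
    _ = _ := by simp

noncomputable def base (hd : ∀ i, NeZero (d i)) (i : Fin k) : Idx d :=
  ⟨i, EuclideanSpace.single 0 1, EuclideanSpace.single 0 1, by simp, by simp⟩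

lemma blocks (hd : ∀ i, NeZero (d i)) (hd' : ∀ i, NeZero (d' i)) (ψ : PB d ≃ PB d')
    (h : ∀ u v, BJOrth u v ↔ BJOrth (ψ u) (ψ v)) :
    ∃ e : Fin k ≃ Fin k', ∀ i, d i = d' (e i) := by
  choose σ hσ using exists_match ψ h
  choose τ hτ using exists_match ψ.symm (fun u v => by rw [h]; simp)
  have hτ' : ∀ q y, fn q y = 0 ↔ fn (τ q) (ψ.symm y) = 0 := hτ
  have hστ : ∀ q, (σ (τ q)).i = q.i := by
    intro q
    refine (rel_of_par ?_).same
    rw [← Submodule.mem_span_singleton, mem_span_iff]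
    intro y hy
    have := hy _ rfl
    rw [hτ, hσ]; simpa using this
  have hτσ : ∀ q, (τ (σ q)).i = q.i := by
    intro q
    refine (rel_of_par ?_).same
    rw [← Submodule.mem_span_singleton, mem_span_iff]
    intro y hy
    have := hy _ rfl
    rw [hσ, hτ]; simpa using this
  have sσ := fun p q => same_map ψ σ hσ (p := p) (q := q)
  have sτ := fun p q => same_map ψ.symm τ hτ (p := p) (q := q)
  let e : Fin k ≃ Fin k' :=
    { toFun := fun i => (σ (base hd i)).i
      invFun := fun j => (τ (base hd' j)).i
      left_inv := fun i => by
        exact (sτ (base hd' (σ (base hd i)).i) (σ (base hd i)) rfl).trans (hτσ (base hd i))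
      right_inv := fun j => by
        exact (sσ (base hd (τ (base hd' j)).i) (τ (base hd' j)) rfl).trans (hστ (base hd' j)) }
  refine ⟨e, fun i => ?_⟩
  have h1 : d' (e i) * d' (e i) ≤ d i * d i :=
    rank_le ψ σ hσ τ hτ i (e i) fun q hq => (sτ q (σ (base hd i)) hq).trans (hτσ _)
  have h2 : d i * d i ≤ d' (e i) * d' (e i) :=
    rank_le ψ.symm τ hτ σ (by simpa using hσ) (e i) i fun q hq => sσ q (base hd i) hq
  nlinarith

lemma reindex (d' : Fin k' → ℕ) (e : Fin k ≃ Fin k') (d : Fin k → ℕ) (h : ∀ i, d i = d' (e i)) :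
    Nonempty (PB d ≃⋆ₐ[ℂ] PB d') := by
  obtain rfl : d = fun i => d' (e i) := funext h
  let F : PB d' →⋆ₙₐ[ℂ] PB (fun i => d' (e i)) :=
    { toFun := fun f i => f (e i)
      map_smul' := fun _ _ => rfl
      map_zero' := rfl
      map_add' := fun _ _ => rfl
      map_mul' := fun _ _ => rfl
      map_star' := fun _ => rfl }
  have hF : Function.Bijective F := (Equiv.piCongrLeft' (fun j => BE (d' j)) e.symm).bijective
  exact ⟨(StarAlgEquiv.ofBijective F hF).symm⟩

lemma bj_iso {A B : Type*} [NonUnitalCStarAlgebra A] [NonUnitalCStarAlgebra B] (Φ : A ≃⋆ₐ[ℂ] B)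
    (u v : A) : BJOrth u v ↔ BJOrth (Φ u) (Φ v) := by
  have hn : ∀ a, ‖Φ a‖ = ‖a‖ := NonUnitalStarAlgHom.norm_map Φ Φ.injective
  simp only [BJOrth, ← map_smul, ← map_add, hn]

end BJC
open BJC
/-- If two complex C*-algebras are BJ-isomorphic (there is a bijection preserving
Birkhoff–James orthogonality in both directions) and the first is finite-dimensional of
complex dimension at least 2, then they are isomorphic as star-algebras over ℂ. -/
theorem cstarAlgebra_bj_classification
    {A₁ A₂ : Type*} [NonUnitalCStarAlgebra A₁] [NonUnitalCStarAlgebra A₂]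
    [FiniteDimensional ℂ A₁] (hdim : 2 ≤ Module.finrank ℂ A₁)
    (φ : A₁ → A₂) (hbij : Function.Bijective φ)
    (hφ : ∀ u v : A₁, BJOrth u v ↔ BJOrth (φ u) (φ v)) :
    Nonempty (A₁ ≃⋆ₐ[ℂ] A₂) := by
  have : FiniteDimensional ℂ A₂ := fd_transfer φ hbij hφ
  obtain ⟨k, d, hd, ⟨Φ₁⟩⟩ := structure_thm (A := A₁)
  obtain ⟨k', d', hd', ⟨Φ₂⟩⟩ := structure_thm (A := A₂)
  let ψ : PB d ≃ PB d' :=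
    (Φ₁.symm.toEquiv.trans (Equiv.ofBijective φ hbij)).trans Φ₂.toEquiv
  have hψ : ∀ u v, BJOrth u v ↔ BJOrth (ψ u) (ψ v) := by
    intro u v
    rw [bj_iso Φ₁.symm, hφ, bj_iso Φ₂]
    rfl
  obtain ⟨e, he⟩ := blocks hd hd' ψ hψ
  obtain ⟨G⟩ := reindex d' e d he
  exact ⟨(Φ₁.trans G).trans Φ₂.symm⟩
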